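/- For λ, μ, γ ∈ K^×, let III⁰⁵_{λ,μ,γ} be the evolution algebra on K³ with natural basis {e₁,e₂,e₃} and products e₁² = e₂, e₂² = λe₁, e₃² = μe₁ + γe₂, e_i e_j = 0 for i ≠ j (structure matrix with rows (0,λ,μ),(1,0,γ),(0,1,0)). Then III⁰⁵_{λ,μ,γ} and III⁰⁵_{λ',μ',γ'} (all parameters in K^×) are isomorphic as K-algebras if and only if there exists k ∈ K^× with λ' = k³λ, μ' = k⁷μ and γ' = k⁶γ. -/

import Mathlib

/-!
If the structure matrix of an evolution algebra over a domain is nonsingular, then elements with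
product zero have disjoint supports in a natural basis. Hence the natural basis is unique up to
permutation and rescaling by units, and isomorphism becomes a relation between structure matrices.
For `III⁰⁵` the structure matrix has determinant `μ` and its only off-diagonal zero is at `(2, 0)`,
so the permutation is trivial; the scaling factors are then `c, c², c⁴`, and `k = c⁻¹`.
-/

open Matrix Module

section NaturalBasis

variable {ι R A B : Type*} [CommRing R]
  [NonUnitalNonAssocRing A] [Module R A] [NonUnitalNonAssocRing B] [Module R B]

/-- A basis of an algebra is natural if distinct basis vectors have product zero; an evolution
algebra is an algebra that admits such a basis. -/
def IsNaturalBasis (e : Basis ι R A) : Prop :=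
  Pairwise fun i j => e i * e j = 0

/-- The structure matrix of a natural basis: column `i` holds the coordinates of `e i * e i`. -/
noncomputable def structureMatrix (e : Basis ι R A) : Matrix ι ι R :=
  e.toMatrix fun i => e i * e i

/-- The relation between the structure matrices of two natural bases of one evolution algebra that
differ by the relabelling `σ` and the rescaling `c`, that is, `e i = c i • f (σ i)`. -/
def IsRescaledRelabelling (M N : Matrix ι ι R) : Prop :=
  ∃ (σ : Equiv.Perm ι) (c : ι → Rˣ), ∀ k i, M k i * c k = c i ^ 2 * N (σ k) (σ i)

variable {e : Basis ι R A} {f : Basis ι R B}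

theorem repr_mul_self (e : Basis ι R A) (i k : ι) :
    e.repr (e i * e i) k = structureMatrix e k i := rfl

theorem IsNaturalBasis.map (he : IsNaturalBasis e) (φ : A ≃ₗ[R] B)
    (hφ : ∀ x y, φ (x * y) = φ x * φ y) : IsNaturalBasis (e.map φ) := fun i j hij => by
  simp only [Basis.map_apply, ← hφ, he hij, map_zero]

theorem structureMatrix_map (e : Basis ι R A) (φ : A ≃ₗ[R] B)
    (hφ : ∀ x y, φ (x * y) = φ x * φ y) : structureMatrix (e.map φ) = structureMatrix e := by
  ext k i
  simp only [← repr_mul_self, Basis.map_apply, ← hφ, Basis.map_repr, LinearEquiv.trans_apply,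
    LinearEquiv.symm_apply_apply]

theorem map_mul_of_map_mul_basis [SMulCommClass R A A] [IsScalarTower R A A]
    [SMulCommClass R B B] [IsScalarTower R B B] (e : Basis ι R A) (φ : A →ₗ[R] B)
    (hφ : ∀ i j, φ (e i * e j) = φ (e i) * φ (e j)) (x y : A) : φ (x * y) = φ x * φ y := by
  have bilinear_eq : (LinearMap.mul R A).compr₂ φ = (LinearMap.mul R B).compl₁₂ φ φ :=
    LinearMap.ext_basis e e hφ
  exact LinearMap.congr_fun₂ bilinear_eq x y

theorem repr_perm_eq_repr_mul {e f : Basis ι R A} {σ : Equiv.Perm ι} {c : ι → Rˣ}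
    (hef : ∀ i, e i = c i • f (σ i)) (x : A) (k : ι) :
    f.repr x (σ k) = e.repr x k * c k := by
  have coord_eq : f.coord (σ k) = (c k : R) • e.coord k := by
    classical
    refine e.ext fun i => ?_
    rw [LinearMap.smul_apply, Basis.coord_apply, Basis.coord_apply, Basis.repr_self, hef,
      Units.smul_def, map_smul, Basis.repr_self]
    obtain rfl | hik := eq_or_ne i k
    · simp
    · simp [hik]
  simpa [mul_comm] using LinearMap.congr_fun coord_eq x

theorem repr_smul_mul_self [SMulCommClass R A A] [IsScalarTower R A A] (f : Basis ι R A)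
    (a : R) (i k : ι) :
    f.repr ((a • f i) * (a • f i)) k = a ^ 2 * structureMatrix f k i := by
  rw [smul_mul_smul_comm, map_smul, Finsupp.smul_apply, repr_mul_self, smul_eq_mul, pow_two]

theorem isRescaledRelabelling_of_eq_smul [SMulCommClass R A A] [IsScalarTower R A A]
    {e f : Basis ι R A} {σ : Equiv.Perm ι} {c : ι → Rˣ} (hef : ∀ i, e i = c i • f (σ i)) :
    IsRescaledRelabelling (structureMatrix e) (structureMatrix f) := by
  refine ⟨σ, c, fun k i => ?_⟩
  rw [← repr_mul_self, ← repr_perm_eq_repr_mul hef, hef, Units.smul_def, repr_smul_mul_self]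

theorem exists_linearEquiv_map_mul_of_isRescaledRelabelling
    [SMulCommClass R A A] [IsScalarTower R A A] [SMulCommClass R B B] [IsScalarTower R B B]
    (he : IsNaturalBasis e) (hf : IsNaturalBasis f)
    (h : IsRescaledRelabelling (structureMatrix e) (structureMatrix f)) :
    ∃ φ : A ≃ₗ[R] B, ∀ x y, φ (x * y) = φ x * φ y := by
  obtain ⟨σ, c, hc⟩ := h
  let φ : A ≃ₗ[R] B := e.equiv ((f.reindex σ.symm).unitsSMul c) (Equiv.refl ι)
  have φ_basis (i : ι) : φ (e i) = c i • f (σ i) := by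
    simp [φ, Basis.unitsSMul_apply]
  have repr_φ (x : A) (k : ι) : f.repr (φ x) (σ k) = e.repr x k * c k := by
    simpa using repr_perm_eq_repr_mul (e := e.map φ) φ_basis (φ x) k
  refine ⟨φ, map_mul_of_map_mul_basis e φ.toLinearMap fun i j => ?_⟩
  simp only [LinearEquiv.coe_coe]
  obtain rfl | hij := eq_or_ne i j
  · refine f.ext_elem fun l => ?_
    obtain ⟨k, rfl⟩ := σ.surjective l
    rw [repr_φ, repr_mul_self, hc, φ_basis, Units.smul_def, repr_smul_mul_self]
  · rw [he hij, map_zero, φ_basis, φ_basis, Units.smul_def, Units.smul_def, smul_mul_smul_comm,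
      hf (σ.injective.ne hij), smul_zero]

variable [Fintype ι]

theorem IsNaturalBasis.mul_eq_sum [SMulCommClass R A A] [IsScalarTower R A A]
    (he : IsNaturalBasis e) (x y : A) :
    x * y = ∑ i, (e.repr x i * e.repr y i) • (e i * e i) := by
  conv_lhs => rw [← e.sum_repr x, ← e.sum_repr y, Finset.sum_mul_sum]
  refine Finset.sum_congr rfl fun i _ => ?_
  rw [Finset.sum_eq_single i, smul_mul_smul_comm]
  · intro j _ hji
    rw [smul_mul_smul_comm, he hji.symm, smul_zero]
  · simp

theorem IsNaturalBasis.repr_mul [SMulCommClass R A A] [IsScalarTower R A A]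
    (he : IsNaturalBasis e) (x y : A) :
    ⇑(e.repr (x * y)) = structureMatrix e *ᵥ (⇑(e.repr x) * ⇑(e.repr y)) := by
  ext k
  simp [he.mul_eq_sum x y, mulVec, dotProduct, repr_mul_self, mul_comm]

theorem IsNaturalBasis.repr_mul_repr_eq_zero [DecidableEq ι] [IsDomain R] [SMulCommClass R A A]
    [IsScalarTower R A A] (he : IsNaturalBasis e) (hdet : (structureMatrix e).det ≠ 0)
    {x y : A} (hxy : x * y = 0) (k : ι) : e.repr x k * e.repr y k = 0 := by
  have mulVec_eq_zero : structureMatrix e *ᵥ (⇑(e.repr x) * ⇑(e.repr y)) = 0 := by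
    rw [← he.repr_mul, hxy, map_zero, Finsupp.coe_zero]
  exact congr_fun (eq_zero_of_mulVec_eq_zero hdet mulVec_eq_zero) k

theorem IsNaturalBasis.exists_perm_units_smul [DecidableEq ι] [IsDomain R] [SMulCommClass R A A]
    [IsScalarTower R A A] {e f : Basis ι R A} (he : IsNaturalBasis e) (hf : IsNaturalBasis f)
    (hdet : (structureMatrix f).det ≠ 0) :
    ∃ (σ : Equiv.Perm ι) (c : ι → Rˣ), ∀ i, e i = c i • f (σ i) := by
  have exists_coord_ne_zero (i : ι) : ∃ k, f.repr (e i) k ≠ 0 := by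
    by_contra! h
    exact e.ne_zero i (f.repr.map_eq_zero_iff.1 (Finsupp.ext h))
  choose s hs using exists_coord_ne_zero
  have eq_of_coord_ne_zero {i j k : ι} (hi : f.repr (e i) k ≠ 0) (hj : f.repr (e j) k ≠ 0) :
      i = j := by
    by_contra hij
    exact mul_ne_zero hi hj (hf.repr_mul_repr_eq_zero hdet (he hij) k)
  have s_injective : Function.Injective s := fun i j hij =>
    eq_of_coord_ne_zero (hs i) (hij ▸ hs j)
  have s_bijective : Function.Bijective s := Finite.injective_iff_bijective.1 s_injective
  have e_eq_smul (i : ι) : e i = f.repr (e i) (s i) • f (s i) := by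
    rw [← f.sum_repr (e i), Finset.sum_eq_single (s i)]
    · simp
    · intro k _ hk
      obtain ⟨j, rfl⟩ := s_bijective.surjective k
      have : f.repr (e i) (s j) = 0 := by
        by_contra h
        exact hk (congr_arg s (eq_of_coord_ne_zero (hs j) h))
      rw [this, zero_smul]
    · simp
  have isUnit_coord (i : ι) : IsUnit (f.repr (e i) (s i)) := by
    refine .of_mul_eq_one (e.repr (f (s i)) i) ?_
    rw [← smul_eq_mul, ← Finsupp.smul_apply, ← map_smul, ← e_eq_smul, e.repr_self,
      Finsupp.single_eq_same]
  exact ⟨Equiv.ofBijective s s_bijective, fun i => (isUnit_coord i).unit, e_eq_smul⟩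

theorem exists_linearEquiv_map_mul_iff_isRescaledRelabelling [DecidableEq ι] [IsDomain R]
    [SMulCommClass R A A] [IsScalarTower R A A] [SMulCommClass R B B] [IsScalarTower R B B]
    (he : IsNaturalBasis e) (hf : IsNaturalBasis f) (hdet : (structureMatrix f).det ≠ 0) :
    (∃ φ : A ≃ₗ[R] B, ∀ x y, φ (x * y) = φ x * φ y) ↔
      IsRescaledRelabelling (structureMatrix e) (structureMatrix f) := by
  refine ⟨fun ⟨φ, hφ⟩ => ?_, exists_linearEquiv_map_mul_of_isRescaledRelabelling he hf⟩
  obtain ⟨σ, c, hc⟩ := (he.map φ hφ).exists_perm_units_smul hf hdet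
  rw [← structureMatrix_map e φ hφ]
  exact isRescaledRelabelling_of_eq_smul hc

end NaturalBasis

section III05

variable {R : Type*} [CommRing R]

/-- The structure matrix of the evolution algebra `III⁰⁵_{λ,μ,γ}`. -/
def III05Matrix (lam mu gam : R) : Matrix (Fin 3) (Fin 3) R :=
  !![0, lam, mu; 1, 0, gam; 0, 1, 0]

theorem det_III05Matrix (lam mu gam : R) : (III05Matrix lam mu gam).det = mu := by
  simp [III05Matrix, det_fin_three]

theorem structureMatrix_eq_III05Matrix {A : Type*} [NonUnitalNonAssocRing A] [Module R A]
    {lam mu gam : R} {e : Basis (Fin 3) R A} (he0 : e 0 * e 0 = e 1)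
    (he1 : e 1 * e 1 = lam • e 0 + e 2) (he2 : e 2 * e 2 = mu • e 0 + gam • e 1) :
    structureMatrix e = III05Matrix lam mu gam := by
  ext k i
  rw [← repr_mul_self]
  fin_cases i <;> fin_cases k <;> simp [he0, he1, he2, III05Matrix]

theorem III05Matrix_apply_eq_zero {lam mu gam : R} (hlam : lam ≠ 0) (hmu : mu ≠ 0)
    (hgam : gam ≠ 0) {k i : Fin 3} (hki : k ≠ i) (h : III05Matrix lam mu gam k i = 0) :
    k = 2 ∧ i = 0 := by
  have := nontrivial_of_ne lam 0 hlam
  fin_cases k <;> fin_cases i <;> simp_all [III05Matrix]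

theorem perm_fin_three_eq_one {σ : Equiv.Perm (Fin 3)} (h0 : σ 0 = 0) (h2 : σ 2 = 2) :
    σ = 1 := by
  revert σ
  decide

theorem eq_inv_pow_mul_iff_mul_pow_eq (u : Rˣ) (a b : R) (m n : ℕ) :
    b = (↑u⁻¹ : R) ^ n * a ↔ a * u ^ m = u ^ (m + n) * b := by
  rw [← Units.val_pow_eq_pow_val, inv_pow, Units.eq_inv_mul_iff_mul_eq, Units.val_pow_eq_pow_val,
    mul_comm a, pow_add, mul_assoc, (u.isUnit.pow m).mul_right_inj, eq_comm]

theorem isRescaledRelabelling_III05Matrix_pow_mul (lam mu gam : R) (k : Rˣ) :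
    IsRescaledRelabelling (III05Matrix lam mu gam)
      (III05Matrix (k ^ 3 * lam) (k ^ 7 * mu) (k ^ 6 * gam)) := by
  have mul_inv_pow (a : R) (m n : ℕ) : a * ↑k⁻¹ ^ m = ↑k⁻¹ ^ (m + n) * (k ^ n * a) :=
    (eq_inv_pow_mul_iff_mul_pow_eq k⁻¹ a _ m n).1 (by rw [inv_inv])
  have lam_entry : lam * ↑k⁻¹ = (↑k⁻¹ ^ 2) ^ 2 * (k ^ 3 * lam) := by
    simpa only [pow_one, ← pow_mul] using mul_inv_pow lam 1 3
  have mu_entry : mu * ↑k⁻¹ = (↑k⁻¹ ^ 4) ^ 2 * (k ^ 7 * mu) := by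
    simpa only [pow_one, ← pow_mul] using mul_inv_pow mu 1 7
  have gam_entry : gam * ↑k⁻¹ ^ 2 = (↑k⁻¹ ^ 4) ^ 2 * (k ^ 6 * gam) := by
    simpa only [← pow_mul] using mul_inv_pow gam 2 6
  have last_entry : (↑k⁻¹ : R) ^ 4 = (↑k⁻¹ ^ 2) ^ 2 := pow_mul _ 2 2
  refine ⟨1, ![k⁻¹, k⁻¹ ^ 2, k⁻¹ ^ 4], fun i j => ?_⟩
  fin_cases i <;> fin_cases j <;>
    simp [III05Matrix, lam_entry, mu_entry, gam_entry, last_entry]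

theorem isRescaledRelabelling_III05Matrix_iff {lam mu gam lam' mu' gam' : R}
    (hlam' : lam' ≠ 0) (hmu' : mu' ≠ 0) (hgam' : gam' ≠ 0) :
    IsRescaledRelabelling (III05Matrix lam mu gam) (III05Matrix lam' mu' gam') ↔
      ∃ k : R, IsUnit k ∧ lam' = k ^ 3 * lam ∧ mu' = k ^ 7 * mu ∧ gam' = k ^ 6 * gam := by
  constructor
  · rintro ⟨σ, c, hc⟩
    have zero_at_image : III05Matrix lam' mu' gam' (σ 2) (σ 0) = 0 := by
      rw [← ((c 0).isUnit.pow 2).mul_right_eq_zero, ← hc]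
      simp [III05Matrix]
    obtain ⟨σ_two, σ_zero⟩ := III05Matrix_apply_eq_zero hlam' hmu' hgam'
      (σ.injective.ne (by decide)) zero_at_image
    obtain rfl := perm_fin_three_eq_one σ_zero σ_two
    have c_one : (c 1 : R) = c 0 ^ 2 := by simpa [III05Matrix] using hc 1 0
    have c_two : (c 2 : R) = c 1 ^ 2 := by simpa [III05Matrix] using hc 2 1
    have lam_eq : lam * c 0 = c 1 ^ 2 * lam' := hc 0 1
    have mu_eq : mu * c 0 = c 2 ^ 2 * mu' := hc 0 2
    have gam_eq : gam * c 1 = c 2 ^ 2 * gam' := hc 1 2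
    rw [c_two, c_one] at mu_eq gam_eq
    rw [c_one] at lam_eq
    refine ⟨↑(c 0)⁻¹, Units.isUnit _, ?_, ?_, ?_⟩
    · exact (eq_inv_pow_mul_iff_mul_pow_eq _ _ _ 1 _).2 (by linear_combination lam_eq)
    · exact (eq_inv_pow_mul_iff_mul_pow_eq _ _ _ 1 _).2 (by linear_combination mu_eq)
    · exact (eq_inv_pow_mul_iff_mul_pow_eq _ _ _ 2 _).2 (by linear_combination gam_eq)
  · rintro ⟨_, ⟨k, rfl⟩, rfl, rfl, rfl⟩
    exact isRescaledRelabelling_III05Matrix_pow_mul lam mu gam k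

end III05

theorem III05_iso_iff_general {R A B : Type*} [CommRing R] [IsDomain R]
    [NonUnitalNonAssocRing A] [Module R A] [SMulCommClass R A A] [IsScalarTower R A A]
    [NonUnitalNonAssocRing B] [Module R B] [SMulCommClass R B B] [IsScalarTower R B B]
    {lam mu gam lam' mu' gam' : R} (hlam' : lam' ≠ 0) (hmu' : mu' ≠ 0) (hgam' : gam' ≠ 0)
    {e : Basis (Fin 3) R A} (hen : IsNaturalBasis e)
    (he0 : e 0 * e 0 = e 1) (he1 : e 1 * e 1 = lam • e 0 + e 2)
    (he2 : e 2 * e 2 = mu • e 0 + gam • e 1)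
    {f : Basis (Fin 3) R B} (hfn : IsNaturalBasis f)
    (hf0 : f 0 * f 0 = f 1) (hf1 : f 1 * f 1 = lam' • f 0 + f 2)
    (hf2 : f 2 * f 2 = mu' • f 0 + gam' • f 1) :
    (∃ φ : A ≃ₗ[R] B, ∀ x y : A, φ (x * y) = φ x * φ y) ↔
      ∃ k : R, IsUnit k ∧ lam' = k ^ 3 * lam ∧ mu' = k ^ 7 * mu ∧ gam' = k ^ 6 * gam := by
  have hE := structureMatrix_eq_III05Matrix he0 he1 he2
  have hF := structureMatrix_eq_III05Matrix hf0 hf1 hf2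
  have hdet : (structureMatrix f).det ≠ 0 := by rwa [hF, det_III05Matrix]
  rw [exists_linearEquiv_map_mul_iff_isRescaledRelabelling hen hfn hdet, hE, hF,
    isRescaledRelabelling_III05Matrix_iff hlam' hmu' hgam']

/-- For `λ, μ, γ ∈ K^×`, `III⁰⁵_{λ,μ,γ}` is the evolution algebra with
natural basis `{e₁,e₂,e₃}` and structure matrix with rows `(0,λ,μ),(1,0,γ),(0,1,0)` (the
`i`-th column holds the coordinates of `e_i²`), i.e. `e₁² = e₂`, `e₂² = λe₁ + e₃`,
`e₃² = μe₁ + γe₂`, and `e_i e_j = 0` for `i ≠ j`.  Then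
`III⁰⁵_{λ,μ,γ} ≅ III⁰⁵_{λ',μ',γ'}` as `K`-algebras iff there is `k ∈ K^×` with
`λ' = k³λ`, `μ' = k⁷μ` and `γ' = k⁶γ`. -/
theorem III05_iso_iff {K A B : Type*} [Field K]
    [NonUnitalNonAssocCommRing A] [Module K A] [SMulCommClass K A A] [IsScalarTower K A A]
    [NonUnitalNonAssocCommRing B] [Module K B] [SMulCommClass K B B] [IsScalarTower K B B]
    (lam mu gam lam' mu' gam' : K) (hlam : lam ≠ 0) (hmu : mu ≠ 0) (hgam : gam ≠ 0)
    (hlam' : lam' ≠ 0) (hmu' : mu' ≠ 0) (hgam' : gam' ≠ 0)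
    (e : Module.Basis (Fin 3) K A) (hen : ∀ i j : Fin 3, i ≠ j → e i * e j = 0)
    (he0 : e 0 * e 0 = e 1) (he1 : e 1 * e 1 = lam • e 0 + e 2)
    (he2 : e 2 * e 2 = mu • e 0 + gam • e 1)
    (f : Module.Basis (Fin 3) K B) (hfn : ∀ i j : Fin 3, i ≠ j → f i * f j = 0)
    (hf0 : f 0 * f 0 = f 1) (hf1 : f 1 * f 1 = lam' • f 0 + f 2)
    (hf2 : f 2 * f 2 = mu' • f 0 + gam' • f 1) :
    (∃ φ : A ≃ₗ[K] B, ∀ x y : A, φ (x * y) = φ x * φ y) ↔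
      ∃ k : K, k ≠ 0 ∧ lam' = k ^ 3 * lam ∧ mu' = k ^ 7 * mu ∧ gam' = k ^ 6 * gam := by
  simpa only [isUnit_iff_ne_zero] using
    III05_iso_iff_general hlam' hmu' hgam' hen he0 he1 he2 hfn hf0 hf1 hf2
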